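/- (Expected discounted horizon in the job search model) Suppose β : Z → [0,∞) is bounded and continuous, Q is a Feller Markov kernel on Z, and there exists n with m_n < 1 (equivalently r(L_β) < 1). Then K(z) := Σ_{t=0}^∞ E_z[∏_{i=0}^{t-1} β(Z_i)] converges for every z ∈ Z, the function K is bounded and continuous on Z, and sup_z K(z) ≤ Σ_{t=0}^∞ m_t < ∞. -/

import Mathlib

open MeasureTheory ProbabilityTheory Filter Topology BoundedContinuousFunction

/-- `expProd Q β n z` is the expectation `E_z[∏_{t=0}^{n-1} β(Z_t)]` of the product of
discount factors along the Markov chain generated by the kernel `Q` and started at `z`,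
encoded by the canonical iterated-integral recursion (the empty product is `1`). -/
noncomputable def expProd {Z : Type*} [MeasurableSpace Z] (Q : ProbabilityTheory.Kernel Z Z)
    (β : Z → ℝ) : ℕ → Z → ℝ
  | 0 => fun _ => 1
  | n + 1 => fun z => β z * ∫ z', expProd Q β n z' ∂(Q z)

/-- `mSup Q β n = sup_{z ∈ Z} E_z[∏_{t=0}^{n-1} β(Z_t)]`. -/
noncomputable def mSup {Z : Type*} [MeasurableSpace Z] (Q : ProbabilityTheory.Kernel Z Z)
    (β : Z → ℝ) (n : ℕ) : ℝ :=
  ⨆ z, expProd Q β n z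

/-!
Conditioning on the first `j` steps and bounding the last `k` factors uniformly in the starting
point gives `m_{j+k} ≤ m_j m_k`. If `m_n < 1`, splitting off the first `n` terms of the partial
sums `S_N` of `∑ m_t` gives `S_N ≤ S_n + m_n S_N`, so they are bounded by `S_n / (1 - m_n)`.
Since `∑ m_t` dominates the series defining `K` uniformly in `z`, `K` inherits continuity from
its terms, which are continuous because `Q` is Feller.
-/

lemma summable_of_add_le_mul {a : ℕ → ℝ} {c : ℝ} {n : ℕ} (ha : ∀ k, 0 ≤ a k) (hc : c < 1)
    (h : ∀ k, a (n + k) ≤ c * a k) : Summable a := by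
  refine summable_of_sum_range_le (c := (∑ k ∈ Finset.range n, a k) / (1 - c)) ha fun N ↦ ?_
  rw [le_div_iff₀ (sub_pos.mpr hc)]
  have hsplit : ∑ k ∈ Finset.range N, a k ≤
      ∑ k ∈ Finset.range n, a k + c * ∑ k ∈ Finset.range N, a k :=
    calc ∑ k ∈ Finset.range N, a k
        ≤ ∑ k ∈ Finset.range (n + N), a k :=
          Finset.sum_le_sum_of_subset_of_nonneg (Finset.range_mono (Nat.le_add_left N n))
            fun k _ _ ↦ ha k
      _ = ∑ k ∈ Finset.range n, a k + ∑ k ∈ Finset.range N, a (n + k) :=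
          Finset.sum_range_add a n N
      _ ≤ ∑ k ∈ Finset.range n, a k + c * ∑ k ∈ Finset.range N, a k := by
          rw [Finset.mul_sum]
          gcongr with k
          exact h k
  linarith

section Measurable

variable {Z : Type*} [MeasurableSpace Z] {Q : Kernel Z Z} {β : Z → ℝ} {C : ℝ}

lemma measurable_expProd [IsSFiniteKernel Q] (hβ : Measurable β) (n : ℕ) :
    Measurable (expProd Q β n) := by
  induction n with
  | zero => exact measurable_const
  | succ n ih => exact hβ.mul ih.stronglyMeasurable.integral_kernel.measurable

lemma expProd_nonneg (hβ0 : ∀ z, 0 ≤ β z) (n : ℕ) (z : Z) : 0 ≤ expProd Q β n z := by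
  induction n generalizing z with
  | zero => exact zero_le_one
  | succ n ih => exact mul_nonneg (hβ0 z) (integral_nonneg ih)

lemma mSup_nonneg (hβ0 : ∀ z, 0 ≤ β z) (n : ℕ) : 0 ≤ mSup Q β n :=
  Real.iSup_nonneg (expProd_nonneg hβ0 n)

variable [IsFiniteKernel Q]

lemma norm_expProd_le_pow (hβC : ∀ z, ‖β z‖ ≤ C) (n : ℕ) (z : Z) :
    ‖expProd Q β n z‖ ≤ (C * Q.bound.toReal) ^ n := by
  induction n generalizing z with
  | zero => simp [expProd]
  | succ n ih =>
    have hC : 0 ≤ C := (norm_nonneg _).trans (hβC z)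
    have hmass : (Q z).real Set.univ ≤ Q.bound.toReal :=
      ENNReal.toReal_mono Q.bound_ne_top (Q.measure_le_bound z Set.univ)
    have hint : ‖∫ z', expProd Q β n z' ∂(Q z)‖ ≤
        (C * Q.bound.toReal) ^ n * (Q z).real Set.univ :=
      norm_integral_le_of_norm_le_const (ae_of_all _ ih)
    calc ‖β z * ∫ z', expProd Q β n z' ∂(Q z)‖
        = ‖β z‖ * ‖∫ z', expProd Q β n z' ∂(Q z)‖ := norm_mul _ _
      _ ≤ C * ((C * Q.bound.toReal) ^ n * Q.bound.toReal) := by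
          gcongr
          · exact hβC z
          · exact hint.trans (by gcongr)
      _ = (C * Q.bound.toReal) ^ (n + 1) := by ring

lemma expProd_le_mSup (hβC : ∀ z, ‖β z‖ ≤ C) (n : ℕ) (z : Z) :
    expProd Q β n z ≤ mSup Q β n :=
  le_ciSup ⟨_, Set.forall_mem_range.2 fun w ↦
    (Real.le_norm_self _).trans (norm_expProd_le_pow hβC n w)⟩ z

lemma norm_expProd_le_mSup (hβ0 : ∀ z, 0 ≤ β z) (hβC : ∀ z, ‖β z‖ ≤ C) (n : ℕ) (z : Z) :
    ‖expProd Q β n z‖ ≤ mSup Q β n :=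
  (Real.norm_of_nonneg (expProd_nonneg hβ0 n z)).trans_le (expProd_le_mSup hβC n z)

lemma integrable_expProd (hβ : Measurable β) (hβC : ∀ z, ‖β z‖ ≤ C) (n : ℕ)
    (μ : Measure Z) [IsFiniteMeasure μ] : Integrable (expProd Q β n) μ :=
  .of_bound (measurable_expProd hβ n).aestronglyMeasurable _
    (ae_of_all _ (norm_expProd_le_pow hβC n))

lemma expProd_add_le_mul_mSup (hβ : Measurable β) (hβ0 : ∀ z, 0 ≤ β z)
    (hβC : ∀ z, ‖β z‖ ≤ C) (j k : ℕ) (z : Z) :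
    expProd Q β (j + k) z ≤ expProd Q β j z * mSup Q β k := by
  induction j generalizing z with
  | zero => simpa only [Nat.zero_add, expProd, one_mul] using expProd_le_mSup hβC k z
  | succ j ih =>
    have hint : ∫ z', expProd Q β (j + k) z' ∂(Q z) ≤
        (∫ z', expProd Q β j z' ∂(Q z)) * mSup Q β k := by
      rw [← integral_mul_const]
      exact integral_mono (integrable_expProd hβ hβC _ _)
        ((integrable_expProd hβ hβC _ _).mul_const _) ih
    rw [Nat.add_right_comm]
    calc β z * ∫ z', expProd Q β (j + k) z' ∂(Q z)
        ≤ β z * ((∫ z', expProd Q β j z' ∂(Q z)) * mSup Q β k) :=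
          mul_le_mul_of_nonneg_left hint (hβ0 z)
      _ = (β z * ∫ z', expProd Q β j z' ∂(Q z)) * mSup Q β k := (mul_assoc _ _ _).symm

lemma mSup_add_le_mul [Nonempty Z] (hβ : Measurable β) (hβ0 : ∀ z, 0 ≤ β z)
    (hβC : ∀ z, ‖β z‖ ≤ C) (j k : ℕ) :
    mSup Q β (j + k) ≤ mSup Q β j * mSup Q β k :=
  ciSup_le fun z ↦ (expProd_add_le_mul_mSup hβ hβ0 hβC j k z).trans
    (mul_le_mul_of_nonneg_right (expProd_le_mSup hβC j z) (mSup_nonneg hβ0 k))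

lemma summable_mSup [Nonempty Z] (hβ : Measurable β) (hβ0 : ∀ z, 0 ≤ β z)
    (hβC : ∀ z, ‖β z‖ ≤ C) (hcon : ∃ n, mSup Q β n < 1) : Summable (mSup Q β) :=
  let ⟨n, hn⟩ := hcon
  summable_of_add_le_mul (mSup_nonneg hβ0) hn (mSup_add_le_mul hβ hβ0 hβC n)

end Measurable

lemma continuous_expProd {Z : Type*} [TopologicalSpace Z] [MeasurableSpace Z] {Q : Kernel Z Z}
    [IsFiniteKernel Q] {β : Z → ℝ} {C : ℝ} (hβc : Continuous β) (hβC : ∀ z, ‖β z‖ ≤ C)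
    (hFeller : ∀ v : Z →ᵇ ℝ, Continuous fun z ↦ ∫ z', v z' ∂(Q z)) (n : ℕ) :
    Continuous (expProd Q β n) := by
  induction n with
  | zero => exact continuous_const
  | succ n ih =>
    exact hβc.mul (hFeller (.ofNormedAddCommGroup _ ih _ (norm_expProd_le_pow hβC n)))

theorem expected_discounted_horizon_general {Z : Type*} [TopologicalSpace Z] [MeasurableSpace Z]
    [OpensMeasurableSpace Z] [Nonempty Z] (Q : Kernel Z Z) [IsFiniteKernel Q]
    (β : Z → ℝ) (hβc : Continuous β) (hβ0 : ∀ z, 0 ≤ β z) (hβb : ∃ C, ∀ z, β z ≤ C)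
    (hFeller : ∀ v : Z →ᵇ ℝ, Continuous fun z ↦ ∫ z', v z' ∂(Q z))
    (hcon : ∃ n : ℕ, mSup Q β n < 1) :
    (∀ z : Z, Summable (fun t : ℕ ↦ expProd Q β t z)) ∧
      Continuous (fun z ↦ ∑' t : ℕ, expProd Q β t z) ∧
      (∃ M : ℝ, ∀ z, (∑' t : ℕ, expProd Q β t z) ≤ M) ∧
      Summable (fun t : ℕ ↦ mSup Q β t) ∧
      ∀ z : Z, (∑' t : ℕ, expProd Q β t z) ≤ ∑' t : ℕ, mSup Q β t := by
  obtain ⟨C, hC⟩ := hβb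
  have hβC (z : Z) : ‖β z‖ ≤ C := (Real.norm_of_nonneg (hβ0 z)).trans_le (hC z)
  have hm : Summable (mSup Q β) := summable_mSup hβc.measurable hβ0 hβC hcon
  have hsum (z : Z) : Summable (fun t ↦ expProd Q β t z) :=
    .of_norm_bounded hm fun t ↦ norm_expProd_le_mSup hβ0 hβC t z
  have hle (z : Z) : ∑' t, expProd Q β t z ≤ ∑' t, mSup Q β t :=
    (hsum z).tsum_le_tsum (fun t ↦ expProd_le_mSup hβC t z) hm
  have hcont : Continuous (fun z ↦ ∑' t, expProd Q β t z) :=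
    continuous_tsum (continuous_expProd hβc hβC hFeller) hm (norm_expProd_le_mSup hβ0 hβC)
  exact ⟨hsum, hcont, ⟨_, hle⟩, hm, hle⟩

/-- **The expected discounted horizon in the job search model.**
If `β` is bounded, nonnegative and continuous, `Q` is a Feller Markov kernel, and
`m_n < 1` for some `n` (equivalently `r(L_β) < 1`), then
`K(z) := Σ_{t=0}^∞ E_z[∏_{i<t} β(Z_i)]` converges for every `z`, `K` is bounded and
continuous, and `sup_z K(z) ≤ Σ_{t=0}^∞ m_t < ∞`. -/
theorem expected_discounted_horizon {Z : Type*} [MetricSpace Z] [MeasurableSpace Z]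
    [BorelSpace Z] [Nonempty Z]
    (Q : ProbabilityTheory.Kernel Z Z) [IsMarkovKernel Q]
    (β : Z → ℝ) (hβc : Continuous β) (hβ0 : ∀ z, 0 ≤ β z) (hβb : ∃ C, ∀ z, β z ≤ C)
    -- `Q` is Feller.
    (hFeller : ∀ v : Z →ᵇ ℝ, Continuous fun z => ∫ z', v z' ∂(Q z))
    (hcon : ∃ n : ℕ, mSup Q β n < 1) :
    (∀ z : Z, Summable (fun t : ℕ => expProd Q β t z)) ∧
      Continuous (fun z => ∑' t : ℕ, expProd Q β t z) ∧
      (∃ M : ℝ, ∀ z, (∑' t : ℕ, expProd Q β t z) ≤ M) ∧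
      Summable (fun t : ℕ => mSup Q β t) ∧
      ∀ z : Z, (∑' t : ℕ, expProd Q β t z) ≤ ∑' t : ℕ, mSup Q β t :=
  expected_discounted_horizon_general Q β hβc hβ0 hβb hFeller hcon
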